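/- Let λ ≥ 2 and let ⟨g_i⟩ be a geodesic ray in F₂ which is a λ-shrinking sequence of some direction in S¹. Then the set of directions θ ∈ S¹ of which ⟨g_i⟩ is a λ-shrinking sequence is exactly a pair of antipodal vectors {θ, −θ}. -/

import Mathlib

noncomputable section

abbrev F2 := FreeGroup Bool

def gh : F2 := FreeGroup.of true
def gv : F2 := FreeGroup.of false

def hmat (l : ℝ) : Matrix.SpecialLinearGroup (Fin 2) ℝ :=
  ⟨!![1, l; 0, 1], by norm_num [Matrix.det_fin_two_of]⟩

def vmat (l : ℝ) : Matrix.SpecialLinearGroup (Fin 2) ℝ :=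
  ⟨!![1, 0; l, 1], by norm_num [Matrix.det_fin_two_of]⟩

def rho (l : ℝ) : F2 →* Matrix.SpecialLinearGroup (Fin 2) ℝ :=
  FreeGroup.lift fun b => if b then hmat l else vmat l

def act (l : ℝ) (g : F2) (x : Fin 2 → ℝ) : Fin 2 → ℝ :=
  (rho l g).val.mulVec x

def nrm (x : Fin 2 → ℝ) : ℝ := Real.sqrt (x 0 ^ 2 + x 1 ^ 2)

def Circ : Set (Fin 2 → ℝ) := {x | nrm x = 1}

def gens : Set F2 := {gh, gv, gh⁻¹, gv⁻¹}

def ShrinkSet (l : ℝ) (g : F2) : Set (Fin 2 → ℝ) :=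
  {x | x ∈ Circ ∧ nrm (act l g x) < 1}

def ExpSet (l : ℝ) (g : F2) : Set (Fin 2 → ℝ) :=
  {x | x ∈ Circ ∧ 1 < nrm (act l g x)}

def IsGeodesicRay (g : ℕ → F2) : Prop :=
  g 0 = 1 ∧ (∀ n, g (n + 1) * (g n)⁻¹ ∈ gens) ∧ ∀ n, g (n + 2) * (g n)⁻¹ ≠ 1

def IsGeodesicSegment (g : ℕ → F2) (N : ℕ) : Prop :=
  g 0 = 1 ∧ (∀ n, n + 1 ≤ N → g (n + 1) * (g n)⁻¹ ∈ gens) ∧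
    ∀ n, n + 2 ≤ N → g (n + 2) * (g n)⁻¹ ≠ 1

def IsShrinkingSeq (l : ℝ) (g : ℕ → F2) (θ : Fin 2 → ℝ) : Prop :=
  ∀ ε : ℝ, 0 < ε → ∃ i : ℕ, nrm (act l (g i) θ) < ε

def Shrinkable (l : ℝ) (θ : Fin 2 → ℝ) : Prop :=
  ∀ ε : ℝ, 0 < ε → ∃ g : F2, nrm (act l g θ) < ε

def Renormalizable (l : ℝ) (θ : Fin 2 → ℝ) : Prop :=
  Shrinkable l θ ∧ ∀ k : F2, ∀ c : ℝ, act l (k * (gh * gv⁻¹) * k⁻¹) θ ≠ c • θ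

abbrev SP := Bool × Bool

def Quad (s : SP) : Set (Fin 2 → ℝ) :=
  {x | (if s.1 then 0 < x 0 else x 0 < 0) ∧ (if s.2 then 0 < x 1 else x 1 < 0)}

def letterSigma : Bool × Bool → SP → SP
  | (true, true), s => (s.2, s.2)
  | (false, true), s => (s.1, s.1)
  | (true, false), s => (!s.2, s.2)
  | (false, false), s => (s.1, !s.1)

def SigmaAct (g : F2) : SP → SP :=
  (FreeGroup.toWord g).foldr (fun w acc => letterSigma w ∘ acc) id

def gammaAut : F2 →* F2 := FreeGroup.lift fun b => if b then gv⁻¹ else gh⁻¹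

def rPerm (s : SP) : SP := (!s.2, s.1)

def rPermInv (s : SP) : SP := (s.2, !s.1)

def shiftRay (g : ℕ → F2) : ℕ → F2 := fun n => g (n + 1) * (g 1)⁻¹

def TailEquiv (g g' : ℕ → F2) : Prop :=
  ∃ m n : ℕ, shiftRay^[m] g = shiftRay^[n] g'

def seqPow (a : F2) : ℕ → F2 := fun n => a ^ n

def seqPer (a b : F2) : ℕ → F2 := fun n =>
  if n % 2 = 0 then (b * a) ^ (n / 2) else a * (b * a) ^ (n / 2)

def Cond1 (g : ℕ → F2) : Prop :=
  ¬ TailEquiv g (seqPow gh) ∧ ¬ TailEquiv g (seqPow gh⁻¹) ∧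
    ¬ TailEquiv g (seqPow gv) ∧ ¬ TailEquiv g (seqPow gv⁻¹)

def Cond2 (g : ℕ → F2) : Prop :=
  ¬ TailEquiv g (seqPer gh gv⁻¹) ∧ ¬ TailEquiv g (seqPer gh⁻¹ gv)

def adjSum {V : Type} (G : SimpleGraph V) (f : V → ℝ) (v : V) : ℝ :=
  ∑ᶠ w ∈ G.neighborSet v, f w

def BoundedValance {V : Type} (G : SimpleGraph V) : Prop :=
  ∃ D : ℕ, ∀ v, (G.neighborSet v).Finite ∧ (G.neighborSet v).ncard ≤ D

def BipartWith {V : Type} (G : SimpleGraph V) (A : Set V) : Prop :=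
  ∀ v w, G.Adj v w → (v ∈ A ↔ w ∉ A)

def Hop {V : Type} (G : SimpleGraph V) (A : Set V) (k : ℤ) (f : V → ℝ) : V → ℝ :=
  fun v => f v + (k : ℝ) * Set.indicator A (adjSum G f) v

def Vop {V : Type} (G : SimpleGraph V) (A : Set V) (k : ℤ) (f : V → ℝ) : V → ℝ :=
  fun v => f v + (k : ℝ) * Set.indicator Aᶜ (adjSum G f) v

def QuadV {V : Type} (A : Set V) (s : SP) : Set (V → ℝ) :=
  {f | (∀ v ∈ A, f v = 0 ∨ (if s.1 then 0 < f v else f v < 0)) ∧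
       ∀ v, v ∉ A → f v = 0 ∨ (if s.2 then 0 < f v else f v < 0)}

def valance {V : Type} (G : SimpleGraph V) (v : V) : ℕ := (G.neighborSet v).ncard

def evec {V : Type} (v : V) : V → ℝ := Set.indicator {v} 1

def InSpoke {V : Type} (G : SimpleGraph V) (x : V) : Prop :=
  ∃ k : ℕ, 2 ≤ k ∧ ∃ c : ℕ → V,
    (∀ i j, 1 ≤ i → i ≤ k → 1 ≤ j → j ≤ k → c i = c j → i = j) ∧
    valance G (c 1) = 1 ∧
    (∀ i, 2 ≤ i → i ≤ k - 1 →
      valance G (c i) = 2 ∧ G.Adj (c i) (c (i - 1)) ∧ G.Adj (c i) (c (i + 1))) ∧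
    ∃ i, 1 ≤ i ∧ i ≤ k ∧ x = c i

/-!
Once a generator has strictly lengthened a vector, every generator other than its inverse
lengthens it again: after a lengthening horizontal shear by `s` with `2 ≤ |s|`, the horizontal
coordinate dominates the vertical one, and repeating the shear moves it further in the same
direction. Hence along a geodesic ray the length of a vector that gets arbitrarily short can never
increase. If two vectors share a shrinking sequence, one orbit tends to zero along a subsequence
while the other stays bounded, so their area form, which `SL(2, ℝ)` preserves, vanishes.
-/

section Sequence

variable {α : Type*} [LinearOrder α] [Zero α] {u : ℕ → α}

lemma exists_gt_lt_of_forall_exists_lt (hpos : ∀ n, 0 < u n) (hsmall : ∀ ε > 0, ∃ i, u i < ε)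
    (n : ℕ) : ∃ i > n, u i < u n := by
  obtain ⟨k, -, hmin⟩ := (Finset.range (n + 1)).exists_min_image u ⟨n, Finset.self_mem_range_succ n⟩
  obtain ⟨i, hi⟩ := hsmall (u k) (hpos k)
  have hni : n < i := by
    by_contra! hin
    exact (hmin i (Finset.mem_range_succ_iff.2 hin)).not_gt hi
  exact ⟨i, hni, hi.trans_le (hmin n (Finset.self_mem_range_succ n))⟩

lemma antitone_of_forall_exists_lt (hpos : ∀ n, 0 < u n) (hsmall : ∀ ε > 0, ∃ i, u i < ε)
    (hinc : ∀ n, u n < u (n + 1) → u (n + 1) < u (n + 2)) : Antitone u := by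
  refine antitone_nat_of_succ_le fun n => ?_
  by_contra! hn
  have hlt : ∀ m ≥ n, u m < u (m + 1) := fun m hm =>
    Nat.le_induction hn (fun m _ => hinc m) m hm
  obtain ⟨i, hni, hi⟩ := exists_gt_lt_of_forall_exists_lt hpos hsmall n
  have hle : u n ≤ u i :=
    Nat.rel_of_forall_rel_succ_of_le_of_le (· ≤ ·) (fun m hm => (hlt m hm).le) le_rfl hni.le
  exact hle.not_gt hi

end Sequence

section Norm

variable {x y : Fin 2 → ℝ}

lemma nrm_sq (x : Fin 2 → ℝ) : nrm x ^ 2 = x 0 ^ 2 + x 1 ^ 2 :=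
  Real.sq_sqrt (by positivity)

lemma nrm_eq_norm_toLp (x : Fin 2 → ℝ) : nrm x = ‖WithLp.toLp 2 x‖ := by
  simp [nrm, EuclideanSpace.norm_eq]

lemma nrm_neg (x : Fin 2 → ℝ) : nrm (-x) = nrm x := by
  simp [nrm]

lemma nrm_nonneg (x : Fin 2 → ℝ) : 0 ≤ nrm x :=
  Real.sqrt_nonneg _

lemma nrm_eq_zero_iff : nrm x = 0 ↔ x = 0 := by
  simp [nrm_eq_norm_toLp]

lemma ne_zero_of_mem_Circ (hx : x ∈ Circ) : x ≠ 0 := fun h =>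
  zero_ne_one ((nrm_eq_zero_iff.2 h).symm.trans hx)

/-- The standard area form on `ℝ²`, which measures whether two vectors are parallel. -/
def wedge (x y : Fin 2 → ℝ) : ℝ := x 0 * y 1 - x 1 * y 0

lemma abs_wedge_le (x y : Fin 2 → ℝ) : |wedge x y| ≤ nrm x * nrm y := by
  refine abs_le_of_sq_le_sq ?_ (mul_nonneg (nrm_nonneg x) (nrm_nonneg y))
  rw [mul_pow, nrm_sq, nrm_sq, wedge]
  nlinarith [sq_nonneg (x 0 * y 0 + x 1 * y 1)]

lemma nrm_sub_mul_nrm_add_sq (x y : Fin 2 → ℝ) :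
    (nrm (x - y) * nrm (x + y)) ^ 2 = (nrm x ^ 2 - nrm y ^ 2) ^ 2 + 4 * wedge x y ^ 2 := by
  simp only [mul_pow, nrm_sq, wedge, Pi.sub_apply, Pi.add_apply]
  ring

lemma eq_or_eq_neg_of_wedge_eq_zero (hnrm : nrm x = nrm y) (hwedge : wedge x y = 0) :
    x = y ∨ x = -y := by
  have hprod : nrm (x - y) * nrm (x + y) = 0 := by
    simpa [hnrm, hwedge] using nrm_sub_mul_nrm_add_sq x y
  simpa only [mul_eq_zero, nrm_eq_zero_iff, sub_eq_zero, add_eq_zero_iff_eq_neg] using hprod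

end Norm

section Shear

variable {p q r s t : ℝ}

lemma mul_pos_of_abs_lt_abs_add_mul (h : |p| < |p + s * q|) : 0 < (p + s * q) * (s * q) := by
  nlinarith [sq_lt_sq.2 h, sq_nonneg (s * q)]

lemma abs_right_lt_abs_add_mul (hs : 2 ≤ |s|) (h : |p| < |p + s * q|) :
    |q| < |p + s * q| := by
  have htri : |s * q| ≤ |p + s * q| + |p| := by
    simpa using abs_sub (p + s * q) p
  rw [abs_mul] at htri
  nlinarith [abs_nonneg q]

lemma abs_lt_abs_add_of_mul_pos (h : 0 < p * q) : |p| < |p + q| := by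
  rw [← sq_lt_sq]
  nlinarith [sq_nonneg q]

lemma abs_lt_abs_add_mul_of_abs_lt (ht : 2 ≤ |t|) (h : |q| < |r|) : |q| < |q + t * r| := by
  have htri : |t * r| ≤ |q + t * r| + |q| := by
    simpa using abs_sub (q + t * r) q
  rw [abs_mul] at htri
  nlinarith [abs_nonneg r]

/-- The shear of `ℝ²` by `s`, horizontal for `true` and vertical for `false`, matching the
generators `gh = of true` and `gv = of false` of `F2`. -/
def shear : Bool → ℝ → (Fin 2 → ℝ) → Fin 2 → ℝ
  | true, s, x => ![x 0 + s * x 1, x 1]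
  | false, s, x => ![x 0, x 1 + s * x 0]

lemma shear_zero (b : Bool) (x : Fin 2 → ℝ) : shear b 0 x = x := by
  ext i
  cases b <;> fin_cases i <;> simp [shear]

lemma shear_shear (b : Bool) (s t : ℝ) (x : Fin 2 → ℝ) :
    shear b s (shear b t x) = shear b (s + t) x := by
  ext i
  cases b <;> fin_cases i <;> simp [shear] <;> ring

lemma nrm_lt_nrm_shear_true {x : Fin 2 → ℝ} :
    nrm x < nrm (shear true s x) ↔ |x 0| < |x 0 + s * x 1| := by
  rw [← sq_lt_sq, ← sq_lt_sq₀ (nrm_nonneg _) (nrm_nonneg _)]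
  simp [nrm_sq, shear]

lemma nrm_lt_nrm_shear_false {x : Fin 2 → ℝ} :
    nrm x < nrm (shear false s x) ↔ |x 1| < |x 1 + s * x 0| := by
  rw [← sq_lt_sq, ← sq_lt_sq₀ (nrm_nonneg _) (nrm_nonneg _)]
  simp [nrm_sq, shear]

lemma nrm_shear_lt_nrm_shear_shear {b c : Bool} {x : Fin 2 → ℝ} (hs : 2 ≤ |s|) (ht : 2 ≤ |t|)
    (hbc : b = c → s = t) (h : nrm x < nrm (shear b s x)) :
    nrm (shear b s x) < nrm (shear c t (shear b s x)) := by
  rcases b <;> rcases c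
  · obtain rfl := hbc rfl
    exact nrm_lt_nrm_shear_false.2 <| abs_lt_abs_add_of_mul_pos <|
      mul_pos_of_abs_lt_abs_add_mul <| nrm_lt_nrm_shear_false.1 h
  · exact nrm_lt_nrm_shear_true.2 <| abs_lt_abs_add_mul_of_abs_lt ht <|
      abs_right_lt_abs_add_mul hs <| nrm_lt_nrm_shear_false.1 h
  · exact nrm_lt_nrm_shear_false.2 <| abs_lt_abs_add_mul_of_abs_lt ht <|
      abs_right_lt_abs_add_mul hs <| nrm_lt_nrm_shear_true.1 h
  · obtain rfl := hbc rfl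
    exact nrm_lt_nrm_shear_true.2 <| abs_lt_abs_add_of_mul_pos <|
      mul_pos_of_abs_lt_abs_add_mul <| nrm_lt_nrm_shear_true.1 h

end Shear

lemma act_one (l : ℝ) (x : Fin 2 → ℝ) : act l 1 x = x := by
  simp [act]

lemma act_mul (l : ℝ) (a b : F2) (x : Fin 2 → ℝ) : act l (a * b) x = act l a (act l b x) := by
  simp only [act, map_mul, Matrix.SpecialLinearGroup.coe_mul, Matrix.mulVec_mulVec]

lemma act_neg (l : ℝ) (a : F2) (x : Fin 2 → ℝ) : act l a (-x) = -act l a x :=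
  Matrix.mulVec_neg _ _

lemma act_ne_zero (l : ℝ) (a : F2) {x : Fin 2 → ℝ} (hx : x ≠ 0) : act l a x ≠ 0 := by
  intro h
  apply hx
  rw [← act_one l x, ← inv_mul_cancel a, act_mul, h, act, Matrix.mulVec_zero]

lemma wedge_act (l : ℝ) (a : F2) (x y : Fin 2 → ℝ) :
    wedge (act l a x) (act l a y) = wedge x y := by
  have hdet := (rho l a).det_coe
  rw [Matrix.det_fin_two] at hdet
  simp only [wedge, act, Matrix.mulVec, dotProduct, Fin.sum_univ_two]
  linear_combination (x 0 * y 1 - x 1 * y 0) * hdet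

lemma act_of (l : ℝ) (b : Bool) (x : Fin 2 → ℝ) : act l (FreeGroup.of b) x = shear b l x := by
  ext i
  cases b <;> fin_cases i <;>
    simp [act, rho, hmat, vmat, shear, Matrix.mulVec, dotProduct, add_comm]

lemma act_of_inv (l : ℝ) (b : Bool) (x : Fin 2 → ℝ) :
    act l (FreeGroup.of b)⁻¹ x = shear b (-l) x := by
  have h : act l (FreeGroup.of b) (shear b (-l) x) = x := by
    rw [act_of, shear_shear, add_neg_cancel, shear_zero]
  conv_lhs => rw [← h, ← act_mul, inv_mul_cancel, act_one]

lemma act_of_zpow (l : ℝ) (b : Bool) (n : ℤ) (x : Fin 2 → ℝ) :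
    act l (FreeGroup.of b ^ n) x = shear b (n * l) x := by
  induction n generalizing x with
  | zero => simp [act_one, shear_zero]
  | succ n ih =>
    rw [zpow_add_one, act_mul, act_of, ih, shear_shear]
    push_cast
    ring_nf
  | pred n ih =>
    rw [zpow_sub_one, act_mul, act_of_inv, ih, shear_shear]
    push_cast
    ring_nf

lemma exists_eq_of_zpow_of_mem_gens {a : F2} (ha : a ∈ gens) :
    ∃ (b : Bool) (e : ℤˣ), a = FreeGroup.of b ^ (e : ℤ) := by
  rcases ha with rfl | rfl | rfl | rfl
  · exact ⟨true, 1, by simp [gh]⟩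
  · exact ⟨false, 1, by simp [gv]⟩
  · exact ⟨true, -1, by simp [gh]⟩
  · exact ⟨false, -1, by simp [gv]⟩

lemma nrm_act_lt_nrm_act_act {l : ℝ} {a b : F2} {x : Fin 2 → ℝ} (hl : 2 ≤ |l|)
    (ha : a ∈ gens) (hb : b ∈ gens) (hba : b * a ≠ 1) (h : nrm x < nrm (act l a x)) :
    nrm (act l a x) < nrm (act l b (act l a x)) := by
  obtain ⟨i, d, rfl⟩ := exists_eq_of_zpow_of_mem_gens ha
  obtain ⟨j, e, rfl⟩ := exists_eq_of_zpow_of_mem_gens hb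
  have hlarge (c : ℤˣ) : 2 ≤ |(c : ℤ) * l| := by
    rcases Int.units_eq_one_or c with rfl | rfl <;> simpa using hl
  have hsame : i = j → (d : ℤ) * l = (e : ℤ) * l := by
    rintro rfl
    have hde : d = e := by
      by_contra hne
      apply hba
      rw [Int.units_ne_iff_eq_neg.1 hne, ← zpow_add]
      simp
    rw [hde]
  simp only [act_of_zpow] at h ⊢
  exact nrm_shear_lt_nrm_shear_shear (hlarge d) (hlarge e) hsame h

section Ray

variable {l : ℝ} {g : ℕ → F2} {x y : Fin 2 → ℝ}

lemma IsShrinkingSeq.neg (hx : IsShrinkingSeq l g x) : IsShrinkingSeq l g (-x) := by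
  simpa only [IsShrinkingSeq, act_neg, nrm_neg] using hx

lemma antitone_nrm_act_of_isShrinkingSeq (hl : 2 ≤ |l|)
    (hstep : ∀ n, g (n + 1) * (g n)⁻¹ ∈ gens) (hred : ∀ n, g (n + 2) * (g n)⁻¹ ≠ 1)
    (hx : x ≠ 0) (hshrink : IsShrinkingSeq l g x) : Antitone fun n => nrm (act l (g n) x) := by
  have hact (n : ℕ) : act l (g (n + 1) * (g n)⁻¹) (act l (g n) x) = act l (g (n + 1)) x := by
    rw [← act_mul, inv_mul_cancel_right]
  refine antitone_of_forall_exists_lt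
    (fun n => (nrm_nonneg _).lt_of_ne' (nrm_eq_zero_iff.not.2 (act_ne_zero l (g n) hx)))
    hshrink fun n hn => ?_
  have hreduced : g (n + 2) * (g (n + 1))⁻¹ * (g (n + 1) * (g n)⁻¹) ≠ 1 := by
    simpa using hred n
  simpa only [hact] using nrm_act_lt_nrm_act_act (x := act l (g n) x) hl (hstep n)
    (hstep (n + 1)) hreduced (by simpa only [hact] using hn)

lemma wedge_eq_zero_of_isShrinkingSeq_of_bounded {C : ℝ} (hx : IsShrinkingSeq l g x)
    (hy : ∀ n, nrm (act l (g n) y) ≤ C) : wedge x y = 0 := by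
  by_contra hne
  have hC : 0 < C + 1 := by linarith [(nrm_nonneg _).trans (hy 0)]
  obtain ⟨i, hi⟩ := hx (|wedge x y| / (C + 1)) (by positivity)
  apply lt_irrefl |wedge x y|
  calc |wedge x y| = |wedge (act l (g i) x) (act l (g i) y)| := by rw [wedge_act]
    _ ≤ nrm (act l (g i) x) * nrm (act l (g i) y) := abs_wedge_le _ _
    _ ≤ nrm (act l (g i) x) * (C + 1) :=
      mul_le_mul_of_nonneg_left ((hy i).trans (by linarith)) (nrm_nonneg _)
    _ < |wedge x y| := (lt_div_iff₀ hC).1 hi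

end Ray

theorem stmt6_general (l : ℝ) (hl : 2 ≤ |l|) (g : ℕ → F2)
    (hstep : ∀ n, g (n + 1) * (g n)⁻¹ ∈ gens) (hred : ∀ n, g (n + 2) * (g n)⁻¹ ≠ 1)
    (hex : ∃ x₀ ∈ Circ, IsShrinkingSeq l g x₀) :
    ∃ x ∈ Circ, {y | y ∈ Circ ∧ IsShrinkingSeq l g y} = ({x, -x} : Set (Fin 2 → ℝ)) := by
  obtain ⟨x, hx, hxs⟩ := hex
  refine ⟨x, hx, Set.Subset.antisymm ?_ ?_⟩
  · rintro y ⟨hy, hys⟩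
    have hanti := antitone_nrm_act_of_isShrinkingSeq hl hstep hred (ne_zero_of_mem_Circ hx) hxs
    have hwedge : wedge y x = 0 :=
      wedge_eq_zero_of_isShrinkingSeq_of_bounded hys fun n => hanti n.zero_le
    exact eq_or_eq_neg_of_wedge_eq_zero (hy.trans hx.symm) hwedge
  · rintro y (rfl | rfl)
    · exact ⟨hx, hxs⟩
    · exact ⟨(nrm_neg x).trans hx, hxs.neg⟩

theorem stmt6 (l : ℝ) (hl : 2 ≤ l) (g : ℕ → F2) (hg : IsGeodesicRay g)
    (hex : ∃ x₀ ∈ Circ, IsShrinkingSeq l g x₀) :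
    ∃ x ∈ Circ, {y | y ∈ Circ ∧ IsShrinkingSeq l g y} = ({x, -x} : Set (Fin 2 → ℝ)) :=
  stmt6_general l (hl.trans (le_abs_self l)) g hg.2.1 hg.2.2 hex
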